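/- arXiv:1812.03080 — 2 statements merged into one kernel-verified Lean document; each statement's English description precedes it below -/
import Mathlib

section
/- Let n ≥ 1 be an integer and set c = (1/n)·e^{1 + 1/n}. Then for every real t > 0 one has (c·t)^{1/(1+t)} ≤ e^{1/n}, and equality holds for t = n. -/
/-- For an integer `n ≥ 1` and `c = (1/n)·e^{1+1/n}`, one has
`(c·t)^{1/(1+t)} ≤ e^{1/n}` for every real `t > 0`, with equality at `t = n`. -/
theorem stmt_8 (n : ℕ) (hn : 1 ≤ n) (c : ℝ)
    (hc : c = (1 / (n : ℝ)) * Real.exp (1 + 1 / (n : ℝ))) :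
    (∀ t : ℝ, 0 < t → (c * t) ^ (1 / (1 + t)) ≤ Real.exp (1 / (n : ℝ))) ∧
      (c * (n : ℝ)) ^ (1 / (1 + (n : ℝ))) = Real.exp (1 / (n : ℝ)) := by
  have hn0 : (0 : ℝ) < n := by exact_mod_cast hn
  constructor
  · intro t ht
    have h1 : c * t ≤ Real.exp ((1 + t) / n) := by
      have h2 : t / n ≤ Real.exp (t / n - 1) := by
        have := Real.add_one_le_exp (t / n - 1)
        linarith
      calc c * t = t / n * Real.exp (1 + 1 / (n : ℝ)) := by rw [hc]; ring
        _ ≤ Real.exp (t / n - 1) * Real.exp (1 + 1 / (n : ℝ)) := by gcongr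
        _ = Real.exp ((1 + t) / n) := by
          rw [← Real.exp_add]; congr 1; ring
    have h0 : 0 ≤ c * t := by rw [hc]; positivity
    calc (c * t) ^ (1 / (1 + t)) ≤ (Real.exp ((1 + t) / n)) ^ (1 / (1 + t)) :=
          Real.rpow_le_rpow h0 h1 (by positivity)
      _ = Real.exp (1 / (n : ℝ)) := by
          rw [← Real.exp_mul]; congr 1; field_simp
  · have h : c * (n : ℝ) = Real.exp (1 + 1 / (n : ℝ)) := by
      rw [hc]; field_simp
    rw [h, ← Real.exp_mul]; congr 1; field_simp; try ring
end

section
/- Let n ≥ 1 be an integer, let C_0 be the 2×2 real matrix with rows (1, 1) and (0, 1), and let C_n be the 2×2 real matrix with rows (0, 0) and ((1/n)·e^{1 + 1/n}, 0). Then for every k ≥ 1 and every ordered product P = M_k M_{k−1} ⋯ M_1 with each factor M_i ∈ {C_0, C_n}, the spectral radius of P satisfies ρ(P) ≤ e^{k/n}; equivalently, the normalized spectral radius ρ(P)^{1/k} is at most e^{1/n}. In particular, C_0^n C_n attains this bound, so it is a spectral maximizing product for the pair {C_0, C_n}. -/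
/-- The spectral radius of a real square matrix: the maximum modulus of its complex
eigenvalues, i.e. the spectral radius of the complexified matrix. -/
noncomputable def realMatrixSpectralRadius {n : ℕ} (M : Matrix (Fin n) (Fin n) ℝ) : ENNReal :=
  spectralRadius ℂ (M.map (fun a => (a : ℂ)))

/-- `Bd n R v`: the vector `v = (x, y)` has extremal norm `sup_m |x + m y| e^{-m/n}` at most `R`. -/
def Bd (n : ℕ) (R : ℝ) (v : Fin 2 → ℂ) : Prop :=
  ∀ m : ℕ, ‖v 0 + (m : ℂ) * v 1‖ ≤ R * Real.exp ((m : ℝ) / n)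

lemma key_exp (n : ℕ) (hn : 1 ≤ n) (m : ℕ) :
    (m : ℝ) / n * Real.exp (1 + 1 / (n : ℝ)) ≤ Real.exp (1 / (n : ℝ)) * Real.exp ((m : ℝ) / n) := by
  have h := Real.add_one_le_exp ((m : ℝ) / n - 1)
  have h2 : Real.exp (1 / (n : ℝ)) * Real.exp ((m : ℝ) / n)
      = Real.exp ((m : ℝ) / n - 1) * Real.exp (1 + 1 / (n : ℝ)) := by
    rw [← Real.exp_add, ← Real.exp_add]; congr 1; ring
  rw [h2]
  exact mul_le_mul_of_nonneg_right (by linarith) (Real.exp_pos _).le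

lemma Bd_C0 (n : ℕ) (R : ℝ) (v : Fin 2 → ℂ) (h : Bd n R v) :
    Bd n (R * Real.exp (1 / (n : ℝ)))
      (((!![1, 1; 0, 1] : Matrix (Fin 2) (Fin 2) ℝ).map (fun a => (a : ℂ))).mulVec v) := by
  intro m
  have := h (m + 1)
  have e : Real.exp (((m + 1 : ℕ) : ℝ) / n) = Real.exp (1 / (n : ℝ)) * Real.exp ((m : ℝ) / n) := by
    rw [← Real.exp_add]; congr 1; push_cast; ring
  rw [e] at this
  simp only [Matrix.mulVec, dotProduct, Fin.sum_univ_two, Matrix.map_apply]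
  simp
  have e2 : v 0 + v 1 + (m : ℂ) * v 1 = v 0 + ((m + 1 : ℕ) : ℂ) * v 1 := by push_cast; ring
  rw [e2]
  refine this.trans (le_of_eq ?_)
  rw [one_div]; ring

lemma Bd_Cn (n : ℕ) (hn : 1 ≤ n) (R : ℝ) (v : Fin 2 → ℂ) (h : Bd n R v) :
    Bd n (R * Real.exp (1 / (n : ℝ)))
      (((!![0, 0; (1 / (n : ℝ)) * Real.exp (1 + 1 / (n : ℝ)), 0] :
        Matrix (Fin 2) (Fin 2) ℝ).map (fun a => (a : ℂ))).mulVec v) := by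
  intro m
  have h0 := h 0
  simp at h0
  have hk := key_exp n hn m
  have e : (((!![0, 0; (1 / (n : ℝ)) * Real.exp (1 + 1 / (n : ℝ)), 0] :
        Matrix (Fin 2) (Fin 2) ℝ).map (fun a => (a : ℂ))).mulVec v) 0 +
      (m : ℂ) * (((!![0, 0; (1 / (n : ℝ)) * Real.exp (1 + 1 / (n : ℝ)), 0] :
        Matrix (Fin 2) (Fin 2) ℝ).map (fun a => (a : ℂ))).mulVec v) 1
      = (((m : ℝ) / n * Real.exp (1 + 1 / (n : ℝ)) : ℝ) : ℂ) * v 0 := by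
    simp only [Matrix.mulVec, dotProduct, Fin.sum_univ_two, Matrix.map_apply]
    simp
    ring
  rw [e, norm_mul, Complex.norm_real, Real.norm_of_nonneg (by positivity)]
  calc _ ≤ (Real.exp (1 / (n : ℝ)) * Real.exp ((m : ℝ) / n)) * R := by
        apply mul_le_mul hk h0 (norm_nonneg _) (by positivity)
    _ = _ := by ring

lemma Bd_list (n : ℕ) (hn : 1 ≤ n) (l : List (Matrix (Fin 2) (Fin 2) ℝ))
    (hl : ∀ A ∈ l, A = !![1, 1; 0, 1] ∨
      A = !![0, 0; (1 / (n : ℝ)) * Real.exp (1 + 1 / (n : ℝ)), 0])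
    (R : ℝ) (v : Fin 2 → ℂ) (h : Bd n R v) :
    Bd n (R * Real.exp ((l.length : ℝ) / n)) ((l.prod.map (fun a => (a : ℂ))).mulVec v) := by
  induction l with
  | nil =>
    have : ((1 : Matrix (Fin 2) (Fin 2) ℝ).map (fun a => (a : ℂ))) = 1 :=
      Matrix.map_one _ (by simp) (by simp)
    simpa [this] using h
  | cons A l ih =>
    have ih := ih (fun B hB => hl B (List.mem_cons_of_mem _ hB))
    have hm : ((A :: l).prod.map (fun a => (a : ℂ))) =
        A.map (fun a => (a : ℂ)) * l.prod.map (fun a => (a : ℂ)) := by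
      rw [List.prod_cons]
      exact Matrix.map_mul (f := Complex.ofRealHom)
    have e : R * Real.exp (((A :: l).length : ℝ) / n) =
        R * Real.exp ((l.length : ℝ) / n) * Real.exp (1 / (n : ℝ)) := by
      rw [mul_assoc, ← Real.exp_add]; congr 2; simp; ring
    rw [hm, e, ← Matrix.mulVec_mulVec]
    rcases hl A (List.mem_cons_self) with h1 | h1
    · rw [h1]; exact Bd_C0 n _ _ ih
    · rw [h1]; exact Bd_Cn n hn _ _ ih

lemma mem_spec (A : Matrix (Fin 2) (Fin 2) ℂ) (μ : ℂ) :
    μ ∈ spectrum ℂ A ↔ ∃ v : Fin 2 → ℂ, v ≠ 0 ∧ A.mulVec v = μ • v := by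
  rw [← Matrix.spectrum_toLin', ← Module.End.hasEigenvalue_iff_mem_spectrum]
  constructor
  · intro h
    obtain ⟨v, hv⟩ := h.exists_hasEigenvector
    exact ⟨v, hv.2, by simpa using hv.apply_eq_smul⟩
  · rintro ⟨v, h0, hv⟩
    exact Module.End.hasEigenvalue_of_hasEigenvector
      (x := v) ⟨by rw [Module.End.mem_eigenspace_iff]; simpa using hv, h0⟩

lemma Bd_exists (n : ℕ) (hn : 1 ≤ n) (v : Fin 2 → ℂ) : ∃ R, Bd n R v := by
  refine ⟨‖v 0‖ + n * ‖v 1‖, fun m => ?_⟩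
  have hn' : (0 : ℝ) < n := by exact_mod_cast hn
  have h := Real.add_one_le_exp ((m : ℝ) / n)
  have h1 : (1 : ℝ) ≤ Real.exp ((m : ℝ) / n) := Real.one_le_exp (by positivity)
  have h2 : (m : ℝ) ≤ n * Real.exp ((m : ℝ) / n) := by
    have : (m : ℝ) / n ≤ Real.exp ((m : ℝ) / n) := by linarith
    rw [div_le_iff₀ hn'] at this
    linarith
  have h3 : ‖v 0 + (m : ℂ) * v 1‖ ≤ ‖v 0‖ + m * ‖v 1‖ := by
    refine (norm_add_le _ _).trans ?_
    simp
  nlinarith [norm_nonneg (v 0), norm_nonneg (v 1),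
    mul_le_mul_of_nonneg_right h2 (norm_nonneg (v 1)),
    mul_le_mul_of_nonneg_left h1 (norm_nonneg (v 0))]

lemma rad_list (n : ℕ) (hn : 1 ≤ n) (l : List (Matrix (Fin 2) (Fin 2) ℝ))
    (hl : ∀ A ∈ l, A = !![1, 1; 0, 1] ∨
      A = !![0, 0; (1 / (n : ℝ)) * Real.exp (1 + 1 / (n : ℝ)), 0]) :
    realMatrixSpectralRadius l.prod ≤ ENNReal.ofReal (Real.exp ((l.length : ℝ) / n)) := by
  unfold realMatrixSpectralRadius spectralRadius
  refine iSup₂_le fun μ hμ => ?_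
  obtain ⟨v, hv0, hv⟩ := (mem_spec _ _).1 hμ
  rw [← ENNReal.ofReal_coe_nnreal, coe_nnnorm]
  apply ENNReal.ofReal_le_ofReal
  by_contra! hlt
  set L := Real.exp ((l.length : ℝ) / n) with hL
  have hLpos : 0 < L := Real.exp_pos _
  have hμpos : 0 < ‖μ‖ := hLpos.trans hlt
  obtain ⟨R, hR⟩ := Bd_exists n hn v
  -- iterate
  have hit : ∀ j : ℕ, Bd n (R * (L / ‖μ‖) ^ j) v := by
    intro j
    induction j with
    | zero => simpa using hR
    | succ j ih =>
      have := Bd_list n hn l hl _ v ih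
      rw [hv] at this
      intro m
      have h := this m
      simp only [Pi.smul_apply, smul_eq_mul] at h
      rw [show μ * v 0 + (m : ℂ) * (μ * v 1) = μ * (v 0 + m * v 1) by ring, norm_mul] at h
      rw [← hL] at h
      rw [mul_comm, ← le_div_iff₀ hμpos] at h
      refine h.trans (le_of_eq ?_)
      rw [pow_succ]; field_simp
  have hz : ∀ m : ℕ, v 0 + (m : ℂ) * v 1 = 0 := by
    intro m
    have ht : Filter.Tendsto (fun j : ℕ => R * (L / ‖μ‖) ^ j * Real.exp ((m : ℝ) / n))
        Filter.atTop (nhds (R * 0 * Real.exp ((m : ℝ) / n))) :=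
      ((tendsto_pow_atTop_nhds_zero_of_lt_one (by positivity)
        ((div_lt_one hμpos).2 hlt)).const_mul R).mul_const _
    have := ge_of_tendsto' ht (fun j => hit j m)
    simpa using this
  apply hv0
  have a := hz 0
  have b := hz 1
  simp at a
  simp [a] at b
  ext i; fin_cases i <;> simp [a, b]

lemma C0_pow (n : ℕ) : (!![1, 1; 0, 1] : Matrix (Fin 2) (Fin 2) ℝ) ^ n = !![1, (n : ℝ); 0, 1] := by
  induction n with
  | zero => simp [Matrix.one_fin_two]
  | succ n ih => rw [pow_succ, ih]; simp [Matrix.mul_fin_two, add_comm]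

/-- With `C₀ = !![1,1;0,1]` and `Cₙ = !![0,0;(1/n)e^{1+1/n},0]`, every
ordered product `P = M_k ⋯ M_1` of `k ≥ 1` factors from `{C₀, Cₙ}` satisfies
`ρ(P) ≤ e^{k/n}` (i.e. `ρ(P)^{1/k} ≤ e^{1/n}`), and `C₀^n Cₙ` attains this bound
(it has spectral radius `e^{(n+1)/n}`), so it is a spectral maximizing product. -/
theorem stmt_10 (n : ℕ) (hn : 1 ≤ n)
    (C₀ Cₙ : Matrix (Fin 2) (Fin 2) ℝ)
    (hC₀ : C₀ = !![1, 1; 0, 1])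
    (hCₙ : Cₙ = !![0, 0; (1 / (n : ℝ)) * Real.exp (1 + 1 / (n : ℝ)), 0]) :
    (∀ k : ℕ, 1 ≤ k → ∀ M : Fin k → Matrix (Fin 2) (Fin 2) ℝ,
      (∀ j, M j = C₀ ∨ M j = Cₙ) →
      realMatrixSpectralRadius (List.ofFn M).prod ≤
        ENNReal.ofReal (Real.exp ((k : ℝ) / (n : ℝ)))) ∧
    realMatrixSpectralRadius (C₀ ^ n * Cₙ) =
      ENNReal.ofReal (Real.exp (((n : ℝ) + 1) / (n : ℝ))) := by
  subst hC₀ hCₙ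
  constructor
  · intro k _ M hM
    have := rad_list n hn (List.ofFn M) (by
      intro A hA
      obtain ⟨j, rfl⟩ := (List.mem_ofFn' M A).1 hA
      exact hM j)
    simpa using this
  · apply le_antisymm
    · have := rad_list n hn (List.replicate n !![1, 1; 0, 1] ++
        [!![0, 0; (1 / (n : ℝ)) * Real.exp (1 + 1 / (n : ℝ)), 0]]) (by
        intro A hA
        rcases List.mem_append.1 hA with h | h
        · exact Or.inl (List.eq_of_mem_replicate h)
        · exact Or.inr (List.mem_singleton.1 h))
      rw [List.prod_append, List.prod_replicate, List.prod_singleton, List.length_append,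
        List.length_replicate, List.length_singleton] at this
      push_cast at this
      exact this
    · have hn' : (n : ℝ) ≠ 0 := by positivity
      have hnc : (n : ℂ) ≠ 0 := by exact_mod_cast hn'
      have e : ((n : ℝ) + 1) / n = 1 + 1 / n := by field_simp
      rw [C0_pow, e]
      unfold realMatrixSpectralRadius spectralRadius
      have hmem : ((Real.exp (1 + 1 / (n : ℝ)) : ℝ) : ℂ) ∈ spectrum ℂ
          ((!![1, (n : ℝ); 0, 1] * !![0, 0; (1 / (n : ℝ)) * Real.exp (1 + 1 / (n : ℝ)), 0] :
            Matrix (Fin 2) (Fin 2) ℝ).map (fun a => (a : ℂ))) := by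
        rw [mem_spec]
        refine ⟨![(n : ℂ), 1], fun h => one_ne_zero (congrFun h 1), ?_⟩
        generalize Real.exp (1 + 1 / (n : ℝ)) = E
        ext i
        fin_cases i <;>
          simp [Matrix.mulVec, dotProduct, Fin.sum_univ_two, Matrix.mul_fin_two] <;> field_simp <;> simp
      refine le_trans (le_of_eq ?_) (le_iSup₂ (f := fun (k : ℂ) (_ : k ∈ spectrum ℂ _) =>
        (‖k‖₊ : ENNReal)) _ hmem)
      rw [← ENNReal.ofReal_coe_nnreal, coe_nnnorm, Complex.norm_real,
        Real.norm_of_nonneg (Real.exp_pos _).le]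
end
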